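/- Deterministic bound on logarithmic mass near 1: there is a universal constant c > 0 such that for every polynomial p of degree n ≥ 1 all of whose coefficients are real and strictly positive, with zeros z_1,…,z_n counted with multiplicity, one has (1/n) Σ_{i : |1−z_i| < 1} |log|1−z_i|| ≤ c. -/

import Mathlib

open MeasureTheory ProbabilityTheory Filter Polynomial
open scoped ENNReal NNReal Classical

noncomputable section

/-- Polynomials of positive degree with all coefficients real and strictly positive. -/
def polPos (p : Polynomial ℂ) : Prop :=
  0 < p.natDegree ∧ ∀ i ≤ p.natDegree, (p.coeff i).im = 0 ∧ 0 < (p.coeff i).re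

/-- Empirical measure of the zeros of a polynomial (counted with multiplicity). -/
def zeroMeasure (p : Polynomial ℂ) : Measure ℂ :=
  (p.natDegree : ℝ≥0∞)⁻¹ • (p.roots.map MeasureTheory.Measure.dirac).sum

/-- The closure of the set of empirical zero measures of polynomials with positive
coefficients, inside the space of probability measures with the weak topology. -/
def calP : Set (ProbabilityMeasure ℂ) :=
  closure {μ : ProbabilityMeasure ℂ |
    ∃ p : Polynomial ℂ, polPos p ∧ (μ : Measure ℂ) = zeroMeasure p}

/-- The kernel f(z,w) = log|1-z| + log|1-w| - log|z-w|. -/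
def fker (z w : ℂ) : ℝ :=
  Real.log ‖1 - z‖ + Real.log ‖1 - w‖
    - Real.log ‖z - w‖

/-- The double integral ∬ f dμ dμ, as an extended real number: the (Lebesgue)
integral of the positive part minus that of the negative part. -/
def doubleInt (μ : Measure ℂ) : EReal :=
  ((∫⁻ q : ℂ × ℂ, ENNReal.ofReal (fker q.1 q.2) ∂(μ.prod μ) : ℝ≥0∞) : EReal)
    - ((∫⁻ q : ℂ × ℂ, ENNReal.ofReal (-(fker q.1 q.2)) ∂(μ.prod μ) : ℝ≥0∞) : EReal)

/-- The large deviations rate function. -/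
def rateI (μ : ProbabilityMeasure ℂ) : EReal :=
  if μ ∈ calP then (2 : EReal)⁻¹ * doubleInt (μ : Measure ℂ) else ⊤

end

theorem aux_norm_eval_prod (s : Multiset ℂ) (f : ℂ → ℂ[X]) (u : ℂ) :
    ‖((s.map f).prod).eval u‖ = (s.map (fun z => ‖(f z).eval u‖)).prod := by
  induction s using Multiset.induction_on with
  | empty => simp
  | cons a s ih => simp [eval_mul, ih]

theorem aux_log_sum (s : Multiset ℂ) (h1 : ∀ z ∈ s, ‖1 - z‖ < 1) (h0 : ∀ z ∈ s, 1 - z ≠ 0) :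
    0 < (s.map (fun z => ‖1 - z‖)).prod ∧
    (s.map (fun z => |Real.log ‖1 - z‖|)).sum = - Real.log (s.map (fun z => ‖1 - z‖)).prod := by
  induction s using Multiset.induction_on with
  | empty => simp
  | cons a s ih =>
    obtain ⟨ih1, ih2⟩ := ih (fun z hz => h1 z (Multiset.mem_cons_of_mem hz))
      (fun z hz => h0 z (Multiset.mem_cons_of_mem hz))
    have ha : 0 < ‖1 - a‖ := norm_pos_iff.2 (h0 a (Multiset.mem_cons_self a s))
    have ha1 := h1 a (Multiset.mem_cons_self a s)
    refine ⟨by simpa using mul_pos ha ih1, ?_⟩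
    rw [Multiset.map_cons, Multiset.sum_cons, Multiset.map_cons, Multiset.prod_cons,
      Real.log_mul ha.ne' ih1.ne', ih2, abs_of_nonpos (Real.log_nonpos ha.le ha1.le)]
    ring

theorem aux_bound (p : ℂ[X]) (hp : polPos p) :
    0 < ‖p.eval 1‖ ∧ ∀ u : ℂ, ‖u‖ = 1 → ‖p.eval (1 + u)‖ ≤ 2 ^ p.natDegree * ‖p.eval 1‖ := by
  obtain ⟨-, hc⟩ := hp
  have hnorm : ∀ i ≤ p.natDegree, p.coeff i = ((‖p.coeff i‖ : ℝ) : ℂ) ∧ 0 < ‖p.coeff i‖ := by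
    intro i hi
    obtain ⟨h1, h2⟩ := hc i hi
    have : p.coeff i = (((p.coeff i).re : ℝ) : ℂ) := Complex.ext (by simp) (by simp [h1])
    constructor
    · rw [this, Complex.norm_real, Real.norm_of_nonneg h2.le]
    · rw [norm_pos_iff]; intro h; simp [h] at h2
  have h1 : p.eval 1 = ((∑ i ∈ Finset.range (p.natDegree + 1), ‖p.coeff i‖ : ℝ) : ℂ) := by
    rw [eval_eq_sum_range]
    push_cast
    refine Finset.sum_congr rfl fun i hi => ?_
    rw [one_pow, mul_one]
    exact (hnorm i (by simpa [Nat.lt_succ_iff] using hi)).1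
  have hS : 0 < ∑ i ∈ Finset.range (p.natDegree + 1), ‖p.coeff i‖ :=
    Finset.sum_pos (fun i hi => (hnorm i (by simpa [Nat.lt_succ_iff] using hi)).2) ⟨0, by simp⟩
  have h2 : ‖p.eval 1‖ = ∑ i ∈ Finset.range (p.natDegree + 1), ‖p.coeff i‖ := by
    rw [h1, Complex.norm_real, Real.norm_of_nonneg hS.le]
  refine ⟨h2 ▸ hS, fun u hu => ?_⟩
  rw [h2, eval_eq_sum_range, Finset.mul_sum]
  refine (norm_sum_le _ _).trans (Finset.sum_le_sum fun i hi => ?_)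
  rw [norm_mul, norm_pow, mul_comm]
  have hu2 : ‖1 + u‖ ≤ 2 := (norm_add_le _ _).trans (by rw [hu, norm_one]; norm_num)
  have : ‖1 + u‖ ^ i ≤ 2 ^ p.natDegree :=
    (pow_le_pow_left₀ (norm_nonneg _) hu2 i).trans
      (pow_le_pow_right₀ (by norm_num) (by simpa [Nat.lt_succ_iff] using hi))
  gcongr

theorem aux_circle (w u : ℂ) (hu : ‖u‖ = 1) :
    ‖1 - (starRingEnd ℂ) w * u‖ = ‖u - w‖ := by
  have h : u * (starRingEnd ℂ) u = 1 := by
    rw [Complex.mul_conj, Complex.normSq_eq_norm_sq, hu]; simp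
  have : 1 - (starRingEnd ℂ) w * u = u * (starRingEnd ℂ) (u - w) := by
    rw [map_sub, mul_sub, h]; ring
  rw [this, norm_mul, hu, one_mul, Complex.norm_conj]

/-- Deterministic bound on logarithmic mass near `1`: there is a universal constant
`c > 0` such that for every polynomial `p` of degree `n ≥ 1` with real, strictly
positive coefficients, with zeros counted with multiplicity,
`(1/n) ∑_{i : |1-z_i| < 1} |log|1-z_i|| ≤ c`. -/
theorem log_mass_near_one_bound :
    ∃ c : ℝ, 0 < c ∧ ∀ p : Polynomial ℂ, polPos p →
      ((p.natDegree : ℝ))⁻¹ *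
          (((p.roots.filter (fun z => ‖1 - z‖ < 1)).map
              (fun z => |Real.log ‖1 - z‖|)).sum) ≤ c := by
  refine ⟨Real.log 2, Real.log_pos (by norm_num), fun p hp => ?_⟩
  obtain ⟨hpos, hb⟩ := aux_bound p hp
  have hn : (0 : ℝ) < p.natDegree := by exact_mod_cast hp.1
  set I := p.roots.filter (fun z => ‖1 - z‖ < 1) with hI
  set O := p.roots.filter (fun z => ¬ ‖1 - z‖ < 1) with hO
  have hsplit : I + O = p.roots := Multiset.filter_add_not _ _
  have hfac : p = C p.leadingCoeff * ((I.map (fun z => X - C z)).prod *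
      (O.map (fun z => X - C z)).prod) := by
    rw [← Multiset.prod_add, ← Multiset.map_add, hsplit]
    exact (IsAlgClosed.splits p).eq_prod_roots
  have hnp : ∀ v : ℂ, ‖p.eval v‖ = ‖p.leadingCoeff‖ * ((I.map (fun z => ‖v - z‖)).prod *
      (O.map (fun z => ‖v - z‖)).prod) := by
    intro v
    conv_lhs => rw [hfac]
    simp [eval_mul, aux_norm_eval_prod]
  obtain ⟨hP, hsum⟩ := aux_log_sum I (fun z hz => (Multiset.mem_filter.1 hz).2) (by
    intro z hz h
    have hz' := (Multiset.mem_filter.1 hz).1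
    rw [← sub_eq_zero.1 h] at hz'
    rw [(mem_roots'.1 hz').2] at hpos
    simp at hpos)
  set g : ℂ[X] := C p.leadingCoeff *
    ((I.map (fun z => 1 - C ((starRingEnd ℂ) (z - 1)) * X)).prod *
      (O.map (fun z => X + 1 - C z)).prod) with hg
  have hng : ∀ u : ℂ, ‖g.eval u‖ = ‖p.leadingCoeff‖ *
      ((I.map (fun z => ‖1 - (starRingEnd ℂ) (z - 1) * u‖)).prod *
      (O.map (fun z => ‖u + 1 - z‖)).prod) := by
    intro u
    simp [hg, eval_mul, aux_norm_eval_prod]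
  have hmax : ‖g.eval 0‖ ≤ 2 ^ p.natDegree * ‖p.eval 1‖ := by
    refine Complex.norm_le_of_forall_mem_frontier_norm_le (f := fun u => g.eval u)
      (U := Metric.ball 0 1) Metric.isBounded_ball g.differentiable.diffContOnCl ?_
      (subset_closure (by simp))
    intro u hu
    rw [frontier_ball _ one_ne_zero] at hu
    have hu1 : ‖u‖ = 1 := by simpa using hu
    refine le_trans (le_of_eq ?_) (hb u hu1)
    show ‖g.eval u‖ = _
    rw [hng, hnp]
    congr 2
    · refine congrArg _ (Multiset.map_congr rfl fun z _ => ?_)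
      rw [aux_circle _ _ hu1]; congr 1; ring
    · refine congrArg _ (Multiset.map_congr rfl fun z _ => ?_)
      congr 1; ring
  rw [hng] at hmax
  rw [hnp] at hmax hpos
  simp only [mul_zero, sub_zero, norm_one, Multiset.map_const', Multiset.prod_replicate, one_pow,
    one_mul, zero_add] at hmax
  set A := (I.map (fun z => ‖1 - z‖)).prod
  set B := (O.map (fun z => ‖1 - z‖)).prod
  have hLB : 0 < ‖p.leadingCoeff‖ * B := by
    have : 0 < (‖p.leadingCoeff‖ * B) * A := by convert hpos using 1; ring
    exact pos_of_mul_pos_left this hP.le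
  have h2A : 1 ≤ 2 ^ p.natDegree * A := by
    by_contra! hlt
    have := mul_lt_mul_of_pos_right hlt hLB
    nlinarith
  have hlog := Real.log_nonneg h2A
  rw [Real.log_mul (by positivity) hP.ne', Real.log_pow] at hlog
  rw [hsum, inv_mul_le_iff₀ hn]
  linarith
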